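/- arXiv:math/0610832 — 15 statements merged into one kernel-verified Lean document; each statement's English description precedes it below -/
import Mathlib

section
/- Let M be a magma satisfying the generalized entropic property, i.e., there exist binary terms t, s such that (x*y)*(u*v) = t(x,u)*s(y,v) for all x,y,u,v in M. Then for any two nonempty subsets A, B of M that are closed under multiplication, the complex product A*B = {a*b : a ∈ A, b ∈ B} is closed under multiplication (i.e., the product of two submagmas of M is a submagma of M). -/
open scoped Pointwise

/-- Evaluation of a binary term (an element of the free magma on two
generators) in a magma `M` under the assignment `0 ↦ a`, `1 ↦ b`. -/
def evalBin {M : Type*} [Mul M] (t : FreeMagma (Fin 2)) (a b : M) : M :=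
  FreeMagma.lift ![a, b] t

theorem evalBin_mem_aux {M : Type*} [Mul M] (C : Set M)
    (hC : ∀ a b : M, a ∈ C → b ∈ C → a * b ∈ C) (t : FreeMagma (Fin 2)) (a b : M)
    (ha : a ∈ C) (hb : b ∈ C) : evalBin t a b ∈ C := by
  unfold evalBin
  induction t using FreeMagma.recOnMul with
  | ih1 i =>
    rw [FreeMagma.lift_of]
    fin_cases i
    · exact ha
    · exact hb
  | ih2 x y hx hy =>
    rw [map_mul]
    exact hC _ _ hx hy

/-- If a magma `M` satisfies the generalized entropic property, then the
complex product of two nonempty multiplicatively closed subsets is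
multiplicatively closed. -/
theorem stmt_0 {M : Type*} [Mul M]
    (hGEP : ∃ t s : FreeMagma (Fin 2),
      ∀ x y u v : M, (x * y) * (u * v) = evalBin t x u * evalBin s y v)
    (A B : Set M) (hA : A.Nonempty) (hB : B.Nonempty)
    (hAc : ∀ a b : M, a ∈ A → b ∈ A → a * b ∈ A)
    (hBc : ∀ a b : M, a ∈ B → b ∈ B → a * b ∈ B) :
    ∀ p q : M, p ∈ A * B → q ∈ A * B → p * q ∈ A * B := by
  obtain ⟨t, s, h⟩ := hGEP
  rintro p q ⟨a, ha, b, hb, rfl⟩ ⟨c, hc, d, hd, rfl⟩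
  exact ⟨_, evalBin_mem_aux A hAc t a c ha hc, _, evalBin_mem_aux B hBc s b d hb hd,
    (h a b c d).symm⟩
end

section
/- If an idempotent magma M satisfies the identity (x*y)*(u*v) = x * s(y,v) for all x,y,u,v in M, for some binary term s, then M is medial. -/
theorem stmt_1_aux {M : Type*} [Mul M] (h : ∀ a u v : M, a * (u * v) = a * v)
    (t : FreeMagma (Fin 2)) :
    (∀ x a b : M, x * evalBin t a b = x * a) ∨ (∀ x a b : M, x * evalBin t a b = x * b) := by
  induction t using FreeMagma.recOnMul with
  | ih1 i =>
    fin_cases i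
    · left; intro x a b; simp [evalBin]
    · right; intro x a b; simp [evalBin]
  | ih2 p q _ ihq =>
    have e : ∀ x a b : M, x * evalBin (p * q) a b = x * evalBin q a b := by
      intro x a b
      simp only [evalBin, map_mul, h]
    simpa only [e] using ihq

/-- An idempotent magma satisfying this instance of the generalized entropic
property is medial. -/
theorem stmt_1 {M : Type*} [Mul M] (hidem : ∀ x : M, x * x = x)
    (s : FreeMagma (Fin 2))
    (h : ∀ x y u v : M, (x * y) * (u * v) = x * evalBin s y v) :
    ∀ x y u v : M, (x * y) * (u * v) = (x * u) * (y * v) := by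
  have h1 : ∀ x y v : M, (x * y) * v = x * evalBin s y v := by
    intro x y v
    have := h x y v v
    rwa [hidem v] at this
  have h2 : ∀ a u v : M, a * (u * v) = a * v := by
    intro a u v
    have := (h a a u v).trans (h1 a a v).symm
    rwa [hidem a] at this
  intro x y u v
  rcases stmt_1_aux h2 s with hs | hs
  · have h3 : ∀ x v : M, x * v = x := by
      intro x v
      have := (h1 x x v).trans (hs x x v)
      rwa [hidem x] at this
    simp only [h3]
  · rw [h, h, hs, hs]
end

section
/- If an idempotent magma M satisfies the identity (x*y)*(u*v) = u * s(y,v) for all x,y,u,v in M, for some binary term s, then M is medial. -/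
/-- An idempotent magma satisfying this instance of the generalized entropic
property is medial. -/
theorem stmt_2 {M : Type*} [Mul M] (hidem : ∀ x : M, x * x = x)
    (s : FreeMagma (Fin 2))
    (h : ∀ x y u v : M, (x * y) * (u * v) = u * evalBin s y v) :
    ∀ x y u v : M, (x * y) * (u * v) = (x * u) * (y * v) := by
  have h1 : ∀ x y w : M, (x * y) * w = y * w := by
    intro x y w
    have a := h x y w w
    have b := h y y w w
    rw [hidem] at a
    rw [hidem, hidem] at b
    rw [a, b]
  have h2 : ∀ y u v : M, y * (u * v) = u * evalBin s y v := by
    intro y u v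
    rw [← h y y u v, hidem]
  have key : ∀ t : FreeMagma (Fin 2),
      (∀ y v w : M, evalBin t y v * w = y * w) ∨ (∀ y v w : M, evalBin t y v * w = v * w) := by
    intro t
    induction t with
    | ih1 i =>
      fin_cases i
      · left; intro y v w; simp [evalBin]
      · right; intro y v w; simp [evalBin]
    | ih2 a b _ ihb =>
      have e : ∀ y v : M, evalBin (a * b) y v = evalBin a y v * evalBin b y v := by
        intro y v; simp [evalBin]
      rcases ihb with ih | ih
      · left; intro y v w; rw [e, h1, ih]
      · right; intro y v w; rw [e, h1, ih]
  intro x y u v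
  rw [h1, h1]
  rcases key s with k | k
  · have c : ∀ y v w : M, v * w = y * w := by
      intro y v w
      have := congrArg (· * w) (h2 y y v)
      simp only [h1, k] at this
      exact this
    have p : ∀ a b : M, a * b = b := fun a b => by rw [c b a, hidem]
    simp only [p]
  · have q : ∀ y v : M, evalBin s y v = y * v := by
      intro y v
      have := h2 y v v
      rw [hidem, ← k y v, hidem] at this
      exact this.symm
    rw [h2, q]
end

section
/- If an idempotent magma M satisfies the identity (x*y)*(u*v) = (x*u) * s(y,v) for all x,y,u,v in M, for some binary term s, then M is medial. -/
/-- An idempotent magma satisfying this instance of the generalized entropic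
property is medial. -/
theorem stmt_3 {M : Type*} [Mul M] (hidem : ∀ x : M, x * x = x)
    (s : FreeMagma (Fin 2))
    (h : ∀ x y u v : M, (x * y) * (u * v) = (x * u) * evalBin s y v) :
    ∀ x y u v : M, (x * y) * (u * v) = (x * u) * (y * v) := by
  have gen : ∀ (P : M → Prop) (a b : M), P a → P b → (∀ x y, P x → P y → P (x * y)) →
      ∀ t : FreeMagma (Fin 2), P (evalBin t a b) := by
    intro P a b ha hb hm t
    induction t with
    | ih1 i => fin_cases i <;> simpa [evalBin]
    | ih2 x y hx hy =>
      have : evalBin (x * y) a b = evalBin x a b * evalBin y a b := by simp [evalBin]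
      rw [this]; exact hm _ _ hx hy
  have sid : ∀ a : M, evalBin s a a = a := fun a =>
    gen (fun z => z = a) a a rfl rfl (by rintro x y rfl rfl; exact hidem _) s
  have rd : ∀ x y z : M, (x * y) * z = (x * z) * (y * z) := by
    intro x y z
    rw [h x z y z, sid]
  have h1 : ∀ x y v : M, x * evalBin s y v = (x * y) * (x * v) := by
    intro x y v
    rw [h x y x v, hidem]
  have key : ∀ x u v : M, x * (u * v) = x * (evalBin s u v * (u * v)) := by
    intro x u v
    calc x * (u * v) = (x * x) * (u * v) := by rw [hidem]
      _ = (x * u * x) * (x * u * v) := by rw [h, h1]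
      _ = (x * u * x) * ((x * v) * (u * v)) := by rw [rd x u v]
      _ = (x * u * (x * v)) * evalBin s x (u * v) := by rw [h (x * u)]
      _ = (x * evalBin s u v) * evalBin s x (u * v) := by rw [h1 x]
      _ = (x * x) * (evalBin s u v * (u * v)) := by rw [h x x]
      _ = _ := by rw [hidem]
  have fixS : ∀ y v : M, evalBin s y v = evalBin s y v * (y * v) := by
    intro y v
    have := gen (fun w => w * evalBin s y v = w * (y * v)) y v
      (by show y * evalBin s y v = y * (y * v); rw [h1, hidem])
      (by
        show v * evalBin s y v = v * (y * v)
        rw [h1, hidem, rd v y v, hidem])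
      (by
        intro a b ha hb
        show a * b * evalBin s y v = a * b * (y * v)
        rw [rd a b, rd a b (y * v), ha, hb]) s
    rw [← this, hidem]
  intro x y u v
  rw [h, key (x * u) y v, ← fixS]
end

section
/- If an idempotent magma M satisfies the identity (x*y)*(u*v) = (u*x) * s(y,v) for all x,y,u,v in M, for some binary term s, then M is medial. -/
theorem evalBin_self_aux {M : Type*} [Mul M] (hidem : ∀ x : M, x * x = x)
    (s : FreeMagma (Fin 2)) (a : M) : evalBin s a a = a := by
  unfold evalBin
  induction s with
  | ih1 i => fin_cases i <;> simp
  | ih2 p q hp hq => rw [map_mul, hp, hq, hidem]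

theorem medial_aux {M : Type*} [Mul M] (f : M → M → M) (hi : ∀ x : M, x * x = x)
    (hf : ∀ x : M, f x x = x)
    (hh : ∀ x y u v : M, (x * y) * (u * v) = (u * x) * f y v) :
    ∀ x y u v : M, (x * y) * (u * v) = (x * u) * (y * v) := by
  have e0 : ∀ x0 : M, (x0 * x0) = x0 := by
    intro x0; first | exact hi x0 | exact hf x0 | exact hh _ _ _ _ | exact (hh _ _ _ _).symm
  have e1 : ∀ x0 : M, (f x0 x0) = x0 := by
    intro x0; first | exact hi x0 | exact hf x0 | exact hh _ _ _ _ | exact (hh _ _ _ _).symm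
  have e2 : ∀ x0 x1 x2 x3 : M, ((x0 * x1) * (f x2 x3)) = ((x1 * x2) * (x0 * x3)) := by
    intro x0 x1 x2 x3; first | exact hi x0 | exact hf x0 | exact hh _ _ _ _ | exact (hh _ _ _ _).symm
  have e3 : ∀ x0 x1 x2 : M, ((x0 * x1) * (x0 * x2)) = (x0 * (f x1 x2)) := by
    intro x0 x1 x2
    have := e2 x0 x0 x1 x2
    have := e0 x0
    grind only
  have e4 : ∀ x0 x1 x2 : M, ((x0 * x1) * (x2 * x1)) = ((x2 * x0) * x1) := by
    intro x0 x1 x2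
    have := e2 x2 x0 x1 x1
    have := e1 x1
    grind only
  have e6 : ∀ x0 x1 : M, ((x0 * x1) * x1) = (x1 * (x0 * x1)) := by
    intro x0 x1
    have := e4 x1 x1 x0
    have := e0 x1
    grind only
  have e7 : ∀ x0 x1 : M, ((x0 * x1) * x1) = ((x1 * x0) * x1) := by
    intro x0 x1
    have := e4 x0 x1 x1
    have := e0 x1
    grind only
  have e8 : ∀ x0 x1 x2 x3 x4 : M, (((x0 * x1) * x2) * ((x3 * x1) * x4)) = ((x1 * x2) * ((x0 * x3) * x4)) := by
    intro x0 x1 x2 x3 x4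
    have := e2 (x3 * x1) (x0 * x1) x2 x4
    have := e4 x3 x1 x0
    have := e2 (x0 * x3) x1 x2 x4
    grind only
  have e28 : ∀ x0 x1 x2 : M, ((x0 * x1) * (x1 * (x2 * x1))) = (((x2 * x1) * x0) * x1) := by
    intro x0 x1 x2
    have := e4 x0 x1 (x2 * x1)
    have := e6 x2 x1
    grind only
  have e29 : ∀ x0 x1 x2 : M, (((x0 * x1) * x0) * x2) = ((x0 * (x0 * x1)) * x2) := by
    intro x0 x1 x2
    have := e6 (x1 * x2) (x0 * x2)
    have := e4 x1 x2 x0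
    have := e4 (x0 * x1) x2 x0
    have := e4 x0 x2 (x0 * x1)
    grind only
  have e31 : ∀ x0 x1 x2 : M, ((x0 * (x1 * x0)) * ((x1 * x0) * x2)) = (x0 * (x1 * x2)) := by
    intro x0 x1 x2
    have := e3 (x1 * x0) x0 x2
    have := e6 x1 x0
    have := e2 x1 x0 x0 x2
    have := e0 x0
    grind only
  have e35 : ∀ x0 x1 : M, ((x0 * x1) * x0) = (x0 * (x1 * x0)) := by
    intro x0 x1
    have := e7 x1 x0
    have := e6 x1 x0
    grind only
  have e91 : ∀ x0 x1 x2 : M, ((x0 * (x1 * x0)) * x2) = ((x0 * (x0 * x1)) * x2) := by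
    intro x0 x1 x2
    have := e29 x0 x1 x2
    have := e35 x0 x1
    grind only
  have e584 : ∀ x0 x1 x2 : M, ((x0 * x1) * (x1 * x2)) = (x1 * (x0 * x2)) := by
    intro x0 x1 x2
    have := e31 (x0 * x1) x1 x2
    have := e91 x1 x0 x2
    have := e28 x0 x1 x0
    have := e35 x0 x1
    have := e8 x0 (x1 * x0) x1 x1 x2
    have := e35 x1 x0
    have := e31 x1 x0 x2
    grind only
  have e649 : ∀ x0 x1 x2 : M, ((x0 * x1) * (x2 * x0)) = ((x1 * x2) * x0) := by
    intro x0 x1 x2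
    have := e584 x1 (x2 * x0) x0
    have := e6 x2 x0
    have := e4 x1 (x2 * x0) x0
    have := e4 x2 x0 x1
    grind only
  have e713 : ∀ x0 x1 x2 : M, ((x0 * x1) * x2) = ((x1 * x0) * x2) := by
    intro x0 x1 x2
    have := e649 (x0 * x2) x2 x1
    have := e6 x0 x2
    have := e4 x2 (x0 * x2) x1
    have := e4 x1 x2 x0
    have := e649 x2 x1 x0
    grind only
  have e860 : ∀ x0 x1 x2 : M, (x0 * (f x1 x2)) = (x0 * (x1 * x2)) := by
    intro x0 x1 x2
    have := e3 x0 x1 x2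
    have := e713 x0 x1 (x0 * x2)
    have := e584 x1 x0 x2
    grind only
  have e909 : ∀ x0 x1 x2 x3 : M, ((x0 * x1) * (x2 * x3)) = ((x1 * x2) * (x0 * x3)) := by
    intro x0 x1 x2 x3
    have := e2 x0 x1 x2 x3
    have := e860 (x0 * x1) x2 x3
    grind only
  have e2101 : ∀ x0 x1 x2 x3 : M, ((x0 * x1) * (x2 * x3)) = ((x0 * x2) * (x1 * x3)) := by
    intro x0 x1 x2 x3
    have := e713 x2 x0 (x1 * x3)
    have := e909 x2 x0 x1 x3
    grind only
  intro a b c d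
  have := e2101 a c b d
  grind only

/-- An idempotent magma satisfying this instance of the generalized entropic
property is medial. -/
theorem stmt_4 {M : Type*} [Mul M] (hidem : ∀ x : M, x * x = x)
    (s : FreeMagma (Fin 2))
    (h : ∀ x y u v : M, (x * y) * (u * v) = (u * x) * evalBin s y v) :
    ∀ x y u v : M, (x * y) * (u * v) = (x * u) * (y * v) := by
  exact medial_aux (evalBin s) hidem (evalBin_self_aux hidem s) h
end

section
/- Let M be an idempotent magma satisfying the generalized entropic property with binary terms t, s, i.e., (x*y)*(u*v) = t(x,u)*s(y,v) for all x,y,u,v in M. If at least one of the terms t, s is linear, then M is medial. -/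
/-- The number of occurrences of the generator `v` in a binary term. -/
def varCount (v : Fin 2) : FreeMagma (Fin 2) → ℕ
  | .of w => if w = v then 1 else 0
  | .mul t₁ t₂ => varCount v t₁ + varCount v t₂

/-- A binary term is linear if each generator occurs in it at most once. -/
def IsLinear (t : FreeMagma (Fin 2)) : Prop := ∀ v : Fin 2, varCount v t ≤ 1

inductive Tm {M : Type*} [Mul M] : (M → M → M) → Prop
  | x : Tm (fun a _ => a)
  | y : Tm (fun _ b => b)
  | mul {p q : M → M → M} : Tm p → Tm q → Tm (fun a b => p a b * q a b)

theorem Tm.idem {M : Type*} [Mul M] (hi : ∀ x : M, x * x = x) {s : M → M → M} (h : Tm s) :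
    ∀ x, s x x = x := by
  induction h with
  | x => intro x; rfl
  | y => intro x; rfl
  | mul _ _ h1 h2 => intro x; simp only [h1, h2, hi]

theorem Tm.eval {M : Type*} [Mul M] (t : FreeMagma (Fin 2)) : Tm (M := M) (evalBin t) := by
  induction t using FreeMagma.recOnMul with
  | ih1 w =>
    fin_cases w
    · exact Tm.x
    · exact Tm.y
  | ih2 p q hp hq => exact Tm.mul hp hq

theorem Tm.op {M : Type*} [Mul M] {s : M → M → M} (h : Tm s) :
    @Tm M ⟨fun a b => b * a⟩ (fun a b => s b a) := by
  induction h with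
  | x => exact @Tm.y M ⟨fun a b => b * a⟩
  | y => exact @Tm.x M ⟨fun a b => b * a⟩
  | mul _ _ h1 h2 => exact @Tm.mul M ⟨fun a b => b * a⟩ _ _ h2 h1

theorem case_X {M : Type*} [Mul M] (hi : ∀ x : M, x * x = x) {s : M → M → M} (hs : Tm s)
    (h : ∀ x y u v : M, (x * y) * (u * v) = x * s y v) (x y u v : M) :
    (x * y) * (u * v) = (x * u) * (y * v) := by
  have hid := hs.idem hi
  have h1 : ∀ x y u v : M, (x * y) * (u * v) = (x * y) * v := fun x y u v => by
    rw [h, ← h x y v v, hi]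
  have h2 : ∀ x u v : M, x * (u * v) = x * v := fun x u v => by
    have := h1 x x u v
    rwa [hi] at this
  have h3 : (∀ x y v : M, x * s y v = x * y) ∨ (∀ x y v : M, x * s y v = x * v) := by
    clear h hid
    induction hs with
    | x => left; intros; rfl
    | y => right; intros; rfl
    | mul _ _ _ h4 => simpa only [h2] using h4
  have h5 : ∀ x y v : M, (x * y) * v = x * s y v := fun x y v => by rw [← h x y v v, hi]
  rcases h3 with h3 | h3
  · have h6 : ∀ x v : M, x * v = x := fun x v => by
      have := h5 x x v
      rwa [h3, hi] at this
    simp only [h6]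
  · simp only [h2, h5, h3]

theorem case_Y {M : Type*} [Mul M] (hi : ∀ x : M, x * x = x) {s : M → M → M} (hs : Tm s)
    (h : ∀ x y u v : M, (x * y) * (u * v) = u * s y v) (x y u v : M) :
    (x * y) * (u * v) = (x * u) * (y * v) := by
  have hid := hs.idem hi
  have h1 : ∀ x y u v : M, (x * y) * (u * v) = y * (u * v) := fun x y u v => by
    rw [h, ← h y y u v, hi]
  have h2 : ∀ x y u : M, (x * y) * u = y * u := fun x y u => by
    have := h1 x y u u
    rwa [hi] at this
  have h0 : ∀ y u v : M, y * (u * v) = u * s y v := fun y u v => by rw [← h1 y, h]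
  have h3 : (∀ y v w : M, s y v * w = y * w) ∨ (∀ y v w : M, s y v * w = v * w) := by
    clear h hid h0
    induction hs with
    | x => left; intros; rfl
    | y => right; intros; rfl
    | mul _ _ _ h4 => simpa only [h2] using h4
  rw [h1, h1]
  rcases h3 with h3 | h3
  · have a1 : ∀ y v, y * s y v = s y v := fun y v => by rw [← h3 y v, hi]
    have a2 : ∀ y v, s y v = y * (y * v) := fun y v => by rw [h0, a1]
    have a3 : ∀ y v : M, v * (y * v) = y * v := fun y v => by rw [h0, hid]
    have a4 : ∀ y v : M, y * (y * v) = y * v := fun y v => by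
      have b1 := h0 y v v
      rw [hi, a2, h0, a2, a3, a3] at b1
      exact b1.symm
    rw [h0, a2, a4]
  · have a1 : ∀ y v, v * s y v = s y v := fun y v => by rw [← h3 y v, hi]
    have a2 : ∀ y v, s y v = y * v := fun y v => by rw [← a1, ← h0, hi]
    rw [h0, a2]

theorem case_XY {M : Type*} [Mul M] (hi : ∀ x : M, x * x = x) {s : M → M → M}
    (hs : ∀ x, s x x = x)
    (h : ∀ x y u v : M, (x * y) * (u * v) = (x * u) * s y v) (x y u v : M) :
    (x * y) * (u * v) = (x * u) * (y * v) := by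
  have h1 : ∀ x y v : M, x * (y * v) = (x * y) * s x v := fun x y v => by rw [← h, hi]
  have h2 : ∀ x y v : M, x * (y * v) = (x * y) * (x * v) := fun x y v => by
    have e1 : x * (x * v) = x * s x v := by rw [h1, hi]
    have e2 : (x * v) * s x v = x * v := by rw [← h1, hi]
    have e3 : (x * y) * ((x * v) * s x v) = (x * y) * s x v := by rw [h, e1, ← h, hi]
    rw [h1, ← e3, e2]
  have h3 : ∀ x y v : M, x * s y v = x * (y * v) := fun x y v => by
    rw [h2, h, hi]
  rw [h, h3]

theorem case_YX {M : Type*} [Mul M] (hi : ∀ x : M, x * x = x) {s : M → M → M}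
    (hs : ∀ x, s x x = x)
    (h : ∀ x y u v : M, (x * y) * (u * v) = (u * x) * s y v) (x y u v : M) :
    (x * y) * (u * v) = (x * u) * (y * v) := by
  have h1 : ∀ x u v : M, x * (u * v) = (u * x) * s x v := fun x u v => by rw [← h, hi]
  have h2 : ∀ x y v : M, x * s y v = (x * y) * (x * v) := fun x y v => by rw [h, hi]
  have h3 : ∀ x u y : M, (u * x) * y = (x * y) * (u * y) := fun x u y => by rw [h, hs]
  have h4 : ∀ x u : M, (u * x) * x = (x * u) * x := fun x u => by
    have := h u x x x
    rwa [hi, hs] at this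
  have k0 : ∀ x y u v : M, (x * y) * ((x * u) * v) = (x * y) * ((u * x) * v) := fun x y u v => by
    rw [h, h, h4]
  -- basic facts on g = x * u, h = u * x
  have k1 : ∀ x u : M, (x * u) * (u * x) = (x * u) * ((x * u) * (u * x)) := fun x u => by
    rw [k0, hi]
  have k2 : ∀ x u : M, (u * x) * s x u = x * u := fun x u => by rw [← h, hi, hi]
  have k3 : ∀ x u : M, (x * u) * s x u = (u * x) * (x * u) := fun x u => by rw [← h]
  have k1' : ∀ x u : M, (x * u) * ((u * x) * (x * u)) = x * u := fun x u => by
    rw [← k0, hi, hi]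
  have k4 : ∀ x u : M, ((x * u) * (u * x)) * s x u = x * u := fun x u => by
    rw [h3, k2, k3, k1']
  have k5 : ∀ x u : M, ((u * x) * (x * u)) * s x u = x * u := fun x u => by
    have e1 : ((x * u) * x) * ((u * x) * u) = ((u * x) * x) * ((x * u) * u) := by
      rw [h4 x u, h4 u x]
    rw [h, h (u * x)] at e1
    rw [e1, k4]
  have k6 : ∀ x u : M, ((u * x) * (x * u)) * (x * u) = x * u := fun x u => by
    have := k5 x u
    rwa [h3, k2, k3] at this
  have k7 : ∀ x u : M, ((x * u) * (u * x)) * (x * u) = x * u := fun x u => by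
    rw [← h4, k6]
  have k8 : ∀ x u : M, ((x * u) * (u * x)) * ((u * x) * (x * u)) = (u * x) * (x * u) :=
    fun x u => by
      rw [h, h2, k7, k6]
  have z : ∀ p q : M, p * q = q → q * p = p → ∀ w, p * w = q * w := fun p q e1 e2 w => by
    have a1 : (p * w) * (q * w) = p * w := by rw [← h3, e2]
    have a2 : (q * w) * (p * w) = q * w := by rw [← h3, e1]
    have a3 := h4 (q * w) (p * w)
    rw [a1, a1, a2, hi] at a3
    exact a3
  have k9 : ∀ x u w : M, ((x * u) * (u * x)) * w = ((u * x) * (x * u)) * w := fun x u w =>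
    z _ _ (k8 x u) (k8 u x) w
  have k10 : ∀ x u w : M, (x * u) * w = (u * x) * w := fun x u w => by
    have c : ((x * u) * w) * ((u * x) * w) = ((u * x) * w) * ((x * u) * w) := by
      rw [← h3, ← h3, k9]
    have key : ∀ A B : M, (A * B) * (B * A) = (B * A) * (A * B) → ∀ w, (A * B) * w =
        ((A * B) * (B * A)) * w := fun A B e w => z _ _ (k1 A B).symm (k7 A B) w
    have e1 := h3 u x w
    have e2 := h3 x u w
    rw [e1, e2] at c ⊢
    have f : ∀ z, ((u * w) * (x * w)) * z = ((x * w) * (u * w)) * z := fun z => by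
      rw [key _ _ c, key _ _ c.symm, c]
    have g1 := f ((u * w) * (x * w))
    have g2 := f ((x * w) * (u * w))
    rw [hi] at g1 g2
    rw [g1, ← c, g2]
  exact case_XY hi hs (fun x y u v => by rw [h, k10]) x y u v

theorem lin_cases {t : FreeMagma (Fin 2)} (ht : IsLinear t) :
    t = .of 0 ∨ t = .of 1 ∨ t = .of 0 * .of 1 ∨ t = .of 1 * .of 0 := by
  have pos : ∀ t : FreeMagma (Fin 2), 1 ≤ varCount 0 t + varCount 1 t := by
    intro t
    induction t with
    | ih1 w => fin_cases w <;> simp [varCount]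
    | ih2 p q h1 h2 =>
      change 1 ≤ (varCount 0 p + varCount 0 q) + (varCount 1 p + varCount 1 q)
      omega
  have h0 := ht 0
  have h1 := ht 1
  clear ht
  cases t with
  | of w => fin_cases w <;> simp
  | mul p q =>
    simp only [varCount] at h0 h1
    cases p with
    | mul a b =>
      have := pos a; have := pos b; have := pos q
      simp only [varCount] at h0 h1
      omega
    | of w =>
      cases q with
      | mul a b =>
        have := pos a; have := pos b; have := pos (.of w)
        simp only [varCount] at *
        omega
      | of w' =>
        right; right
        fin_cases w <;> fin_cases w' <;> simp [varCount] at h0 h1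
        · left; rfl
        · right; rfl

theorem main_lin {M : Type*} [Mul M] (hi : ∀ x : M, x * x = x) {t s : M → M → M} (hs : Tm s)
    (h : ∀ x y u v : M, (x * y) * (u * v) = t x u * s y v)
    (ht : (t = fun a _ => a) ∨ (t = fun _ b => b) ∨ (t = fun a b => a * b) ∨
      (t = fun a b => b * a)) (x y u v : M) :
    (x * y) * (u * v) = (x * u) * (y * v) := by
  rcases ht with rfl | rfl | rfl | rfl
  · exact case_X hi hs h x y u v
  · exact case_Y hi hs h x y u v
  · exact case_XY hi (hs.idem hi) h x y u v
  · exact case_YX hi (hs.idem hi) h x y u v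

theorem lin_eval {M : Type*} [Mul M] {t : FreeMagma (Fin 2)} (ht : IsLinear t) :
    (evalBin (M := M) t = fun a _ => a) ∨ (evalBin (M := M) t = fun _ b => b) ∨
    (evalBin (M := M) t = fun a b => a * b) ∨ (evalBin (M := M) t = fun a b => b * a) := by
  rcases lin_cases ht with rfl | rfl | rfl | rfl
  · left; rfl
  · right; left; rfl
  · right; right; left; rfl
  · right; right; right; rfl

/-- An idempotent magma satisfying the generalized entropic property with
terms `t`, `s`, at least one of which is linear, is medial. -/
theorem stmt_5 {M : Type*} [Mul M] (hidem : ∀ x : M, x * x = x)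
    (t s : FreeMagma (Fin 2))
    (hGEP : ∀ x y u v : M, (x * y) * (u * v) = evalBin t x u * evalBin s y v)
    (hlin : IsLinear t ∨ IsLinear s) :
    ∀ x y u v : M, (x * y) * (u * v) = (x * u) * (y * v) := by
  intro x y u v
  rcases hlin with hl | hl
  · exact main_lin hidem (Tm.eval s) hGEP (lin_eval hl) x y u v
  · refine @main_lin M ⟨fun a b => b * a⟩ hidem (fun a b => evalBin s b a)
      (fun a b => evalBin t b a) (Tm.eval t).op (fun x y u v => hGEP v u y x) ?_ v u y x
    rcases lin_eval (M := M) hl with e | e | e | e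
    · right; left; rw [e]
    · left; rw [e]
    · right; right; left; rw [e]; rfl
    · right; right; right; rw [e]; rfl
end

section
/- Let M be an idempotent magma satisfying the generalized entropic property. If M has a one-sided unit, i.e., there is an element e with e*x = x for all x in M, or with x*e = x for all x in M, then M is medial. -/
/-- A magma satisfies the generalized entropic property if there are binary
terms `t`, `s` with `(x*y)*(u*v) = t(x,u)*s(y,v)`. -/
def GEP (M : Type*) [Mul M] : Prop :=
  ∃ t s : FreeMagma (Fin 2),
    ∀ x y u v : M, (x * y) * (u * v) = evalBin t x u * evalBin s y v

theorem evalBin_self {M : Type*} [Mul M] (hidem : ∀ x : M, x * x = x) (a : M)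
    (t : FreeMagma (Fin 2)) : evalBin t a a = a := by
  unfold evalBin
  induction t with
  | ih1 i => fin_cases i <;> simp
  | ih2 x y hx hy => rw [map_mul, hx, hy, hidem]

theorem medial_aux_s6 {M : Type*} (f t s : M → M → M) (e : M) (he : ∀ x, f e x = x)
    (hte : t e e = e)
    (h : ∀ x y u v, f (f x y) (f u v) = f (t x u) (s y v)) :
    ∀ x y u v, f (f x y) (f u v) = f (f x u) (f y v) := by
  have hs : ∀ y v, s y v = f y v := by
    intro y v
    have := h e y e v
    rw [hte, he, he, he] at this
    exact this.symm
  simp only [hs] at h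
  have h1 : ∀ u v, f u v = f (t e u) v := by
    intro u v
    have := h e e u v
    rwa [he, he, he] at this
  have h2 : ∀ y u v, f y (f u v) = f u (f y v) := by
    intro y u v
    have := h e y u v
    rwa [he, ← h1] at this
  have h3 : ∀ x v, f (f x e) v = f (t x e) v := by
    intro x v
    have := h x e e v
    rwa [he] at this
  have h4 : ∀ x y v, f (f x y) v = f (f x e) (f y v) := by
    intro x y v
    have := h x y e v
    rwa [he, ← h3] at this
  intro x y u v
  rw [h4 x y, h4 x u, h2 y u]

/-- An idempotent magma with a one-sided unit satisfying the generalized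
entropic property is medial. -/
theorem stmt_6 {M : Type*} [Mul M] (hidem : ∀ x : M, x * x = x)
    (hGEP : GEP M)
    (hunit : (∃ e : M, ∀ x : M, e * x = x) ∨ (∃ e : M, ∀ x : M, x * e = x)) :
    ∀ x y u v : M, (x * y) * (u * v) = (x * u) * (y * v) := by
  obtain ⟨t, s, h⟩ := hGEP
  rcases hunit with ⟨e, he⟩ | ⟨e, he⟩
  · exact medial_aux_s6 (fun a b => a * b) (evalBin t) (evalBin s) e he
      (evalBin_self hidem e t) h
  · intro x y u v
    exact medial_aux_s6 (fun a b => b * a) (fun a b => evalBin s b a) (fun a b => evalBin t b a) e he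
      (evalBin_self hidem e s) (fun x y u v => h v u y x) v u y x
end

section
/- Every band (idempotent semigroup) satisfying the generalized entropic property is medial. That is, if M is a magma whose multiplication is associative and idempotent, and there exist binary terms t, s with (x*y)*(u*v) = t(x,u)*s(y,v) for all x,y,u,v in M, then (x*y)*(u*v) = (x*u)*(y*v) for all x,y,u,v in M. -/
theorem evalBin_cases {M : Type*} [Mul M]
    (hassoc : ∀ x y z : M, (x * y) * z = x * (y * z))
    (hidem : ∀ x : M, x * x = x) (t : FreeMagma (Fin 2)) :
    (∀ a b : M, evalBin t a b = a) ∨ (∀ a b : M, evalBin t a b = b) ∨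
    (∀ a b : M, evalBin t a b = a * b) ∨ (∀ a b : M, evalBin t a b = b * a) ∨
    (∀ a b : M, evalBin t a b = a * (b * a)) ∨ (∀ a b : M, evalBin t a b = b * (a * b)) := by
  have c1 : ∀ a b : M, a * (a * b) = a * b := fun a b => by rw [← hassoc, hidem]
  have c2 : ∀ a b : M, a * (b * (a * b)) = a * b := fun a b => by rw [← hassoc, hidem]
  have c3 : ∀ a b c : M, a * (b * (a * (b * c))) = a * (b * c) := fun a b c => by
    have := c1 (a * b) c
    simpa only [hassoc] using this
  induction t with
  | ih1 i =>
    fin_cases i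
    · left; intro a b; simp [evalBin]
    · right; left; intro a b; simp [evalBin]
  | ih2 p q hp hq =>
    have h : ∀ a b : M, evalBin (p * q) a b = evalBin p a b * evalBin q a b := by
      intro a b; simp [evalBin]
    rcases hp with hp | hp | hp | hp | hp | hp <;>
    rcases hq with hq | hq | hq | hq | hq | hq <;>
    simp only [h, hp, hq, hassoc, hidem, c1, c2, c3] <;> simp only [implies_true, true_or, or_true]

/-- A band (idempotent semigroup) satisfying the generalized entropic
property is medial. -/
theorem stmt_8 {M : Type*} [Mul M]
    (hassoc : ∀ x y z : M, (x * y) * z = x * (y * z))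
    (hidem : ∀ x : M, x * x = x)
    (hGEP : GEP M) :
    ∀ x y u v : M, (x * y) * (u * v) = (x * u) * (y * v) := by
  obtain ⟨t, s, h⟩ := hGEP
  have c1 : ∀ a b : M, a * (a * b) = a * b := fun a b => by rw [← hassoc, hidem]
  have c2 : ∀ a b : M, a * (b * (a * b)) = a * b := fun a b => by rw [← hassoc, hidem]
  have c3 : ∀ a b c : M, a * (b * (a * (b * c))) = a * (b * c) := fun a b c => by
    have := c1 (a * b) c
    simpa only [hassoc] using this
  have hP : (∀ a b : M, a * evalBin t a b = a) ∨ (∀ a b : M, a * evalBin t a b = a * b) ∨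
      (∀ a b : M, a * evalBin t a b = a * (b * a)) := by
    rcases evalBin_cases hassoc hidem t with hp | hp | hp | hp | hp | hp <;>
    simp only [hp, hassoc, hidem, c1, c2, c3] <;> simp only [implies_true, true_or, or_true]
  have hQ : (∀ a b : M, evalBin s a b * b = b) ∨ (∀ a b : M, evalBin s a b * b = a * b) ∨
      (∀ a b : M, evalBin s a b * b = b * (a * b)) := by
    rcases evalBin_cases hassoc hidem s with hp | hp | hp | hp | hp | hp <;>
    simp only [hp, hassoc, hidem, c1, c2, c3] <;> simp only [implies_true, true_or, or_true]
  have k : ∀ x y u v : M, x * (y * (u * v)) = (x * evalBin t x u) * (evalBin s y v * v) := by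
    intro x y u v
    have h1 := congrArg (fun z => x * z * v) (h x y u v)
    simpa only [hassoc, hidem, c1] using h1
  clear h
  intro x y u v
  simp only [hassoc]
  rcases hP with hP | hP | hP <;> rcases hQ with hQ | hQ | hQ <;>
    simp only [hP, hQ, hassoc] at k
  · rw [k, k]
  · have e : ∀ x u v : M, x * (u * v) = x * v := fun x u v => by
      have := k x x u v
      simpa only [c1] using this
    simp only [e]
  · have e : ∀ x u v : M, x * (u * v) = x * v := fun x u v => by
      have := k x x u v
      simpa only [c1, c2] using this
    simp only [e]
  · have e : ∀ x y v : M, x * (y * v) = x * v := fun x y v => by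
      have := k x y v v
      simpa only [hidem] using this
    simp only [e]
  · exact k x y u v
  · have e : ∀ x y v : M, x * (y * v) = x * (v * (y * v)) := fun x y v => by
      have := k x y v v
      simpa only [hidem, c1] using this
    rw [k, ← e u y v]
  · have e : ∀ x y v : M, x * (y * v) = x * v := fun x y v => by
      have := k x y v v
      simpa only [hidem, c2] using this
    simp only [e]
  · have e : ∀ x u v : M, x * (u * v) = x * (u * (x * v)) := fun x u v => by
      have := k x x u v
      simpa only [c1] using this
    rw [k, ← e x u (y * v)]
  · have e : ∀ x u v : M, x * (u * v) = x * (u * (x * v)) := fun x u v => by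
      have := k x x u v
      simpa only [c1, c2] using this
    have e' : ∀ x y v : M, x * (y * v) = x * (v * (y * v)) := fun x y v => by
      have := k x y v v
      simpa only [hidem, c1, c2, c3] using this
    rw [k, ← e x u (v * (y * v)), ← e' u y v]
end

section
/- Every idempotent commutative magma satisfying the generalized entropic property is medial. -/
theorem evalBin_idem {M : Type*} [Mul M] (hidem : ∀ x : M, x * x = x)
    (t : FreeMagma (Fin 2)) (a : M) : evalBin t a a = a := by
  unfold evalBin
  induction t with
  | ih1 i => fin_cases i <;> simp
  | ih2 p q hp hq => rw [map_mul, hp, hq, hidem]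

/-- An idempotent commutative magma satisfying the generalized entropic
property is medial. -/
theorem stmt_9 {M : Type*} [Mul M]
    (hidem : ∀ x : M, x * x = x)
    (hcomm : ∀ x y : M, x * y = y * x)
    (hGEP : GEP M) :
    ∀ x y u v : M, (x * y) * (u * v) = (x * u) * (y * v) := by
  obtain ⟨t, s, h⟩ := hGEP
  have h1 : ∀ x u y : M, evalBin t x u * y = (x * y) * (u * y) := fun x u y => by
    rw [h x y u y, evalBin_idem hidem]
  have h2 : ∀ x u y : M, y * evalBin s x u = (x * y) * (u * y) := fun x u y => by
    rw [hcomm x y, hcomm u y, h y x y u, evalBin_idem hidem]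
  have h3 : ∀ x u y : M, evalBin t x u * y = y * evalBin s x u := fun x u y => by
    rw [h1, h2]
  have h4 : ∀ x u : M, evalBin t x u * evalBin s x u = x * u := fun x u => by
    rw [← h, hidem, hidem]
  have ht : ∀ x u : M, evalBin t x u = x * u := fun x u => by
    rw [← hidem (evalBin t x u), h3, h4]
  have hs : ∀ x u : M, evalBin s x u = x * u := fun x u => by
    rw [← hidem (evalBin s x u), ← h3, h4]
  intro x y u v
  rw [h, ht, hs]
end

section
/- Let M be a magma with a two-sided unit element e (e*x = x and x*e = x for all x in M). If M satisfies the generalized entropic property, then M is medial; moreover, the witnessing terms necessarily satisfy t(x,y) = s(x,y) = x*y for all x,y in M. -/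
theorem evalBin_unit_aux {M : Type*} [Mul M] (e : M) (he : e * e = e)
    (t : FreeMagma (Fin 2)) : evalBin t e e = e := by
  unfold evalBin
  induction t using FreeMagma.recOnMul with
  | ih1 x => fin_cases x <;> simp
  | ih2 x y hx hy => rw [map_mul, hx, hy, he]

/-- A magma with a two-sided unit satisfying the generalized entropic property
with terms `t`, `s` is medial, and necessarily `t(x,y) = s(x,y) = x*y`. -/
theorem stmt_12 {M : Type*} [Mul M] (e : M)
    (he₁ : ∀ x : M, e * x = x) (he₂ : ∀ x : M, x * e = x)
    (t s : FreeMagma (Fin 2))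
    (hGEP : ∀ x y u v : M, (x * y) * (u * v) = evalBin t x u * evalBin s y v) :
    (∀ x y u v : M, (x * y) * (u * v) = (x * u) * (y * v)) ∧
    (∀ x y : M, evalBin t x y = x * y) ∧
    (∀ x y : M, evalBin s x y = x * y) := by
  have ht : ∀ x y : M, evalBin t x y = x * y := by
    intro x y
    have h := hGEP x e y e
    rw [evalBin_unit_aux e (he₁ e) s, he₂, he₂, he₂] at h
    exact h.symm
  have hs : ∀ x y : M, evalBin s x y = x * y := by
    intro x y
    have h := hGEP e x e y
    rw [evalBin_unit_aux e (he₁ e) t, he₁, he₁, he₁] at h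
    exact h.symm
  refine ⟨fun x y u v => ?_, ht, hs⟩
  rw [hGEP, ht, hs]
end

section
/- Let M be a commutative magma satisfying the generalized entropic property with binary terms t, s, i.e., (x*y)*(u*v) = t(x,u)*s(y,v) for all x,y,u,v in M. If at least one of the terms t, s is linear, or at least one of them is M-symmetric (meaning t(x,y) = t(y,x) for all x,y in M, respectively s(x,y) = s(y,x) for all x,y in M), then M is medial. -/
theorem aux_pos (t : FreeMagma (Fin 2)) : 1 ≤ varCount 0 t + varCount 1 t := by
  induction t with
  | ih1 w => fin_cases w <;> simp [varCount, FreeMagma.of]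
  | ih2 a b iha ihb =>
    change 1 ≤ (varCount 0 a + varCount 0 b) + (varCount 1 a + varCount 1 b)
    omega

theorem aux_leaf (t : FreeMagma (Fin 2)) (h : varCount 0 t + varCount 1 t ≤ 1) :
    ∃ w, t = .of w := by
  cases t with
  | of w => exact ⟨w, rfl⟩
  | mul a b =>
    have ha := aux_pos a
    have hb := aux_pos b
    simp only [varCount] at h
    omega

theorem aux_linear {M : Type*} [Mul M] (hcomm : ∀ x y : M, x * y = y * x)
    (t : FreeMagma (Fin 2)) (ht : IsLinear t) :
    (∀ x y z : M, evalBin t x y = evalBin t x z) ∨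
    (∀ x y z : M, evalBin t x y = evalBin t z y) ∨
    (∀ x y : M, evalBin t x y = evalBin t y x) := by
  have h0 := ht 0
  have h1 := ht 1
  cases t with
  | of w =>
    fin_cases w
    · left; intro x y z; rfl
    · right; left; intro x y z; rfl
  | mul a b =>
    have ha := aux_pos a
    have hb := aux_pos b
    simp only [varCount] at h0 h1
    obtain ⟨p, rfl⟩ := aux_leaf a (by omega)
    obtain ⟨q, rfl⟩ := aux_leaf b (by omega)
    right; right
    intro x y
    fin_cases p <;> fin_cases q
    · simp [varCount] at h0
    · exact hcomm x y
    · exact hcomm y x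
    · simp [varCount] at h1

theorem aux_const {M : Type*} [Mul M] (hcomm : ∀ x y : M, x * y = y * x)
    (h : ∀ x y u w v : M, (x * y) * (u * v) = (x * y) * (w * v)) :
    ∀ x y u v : M, (x * y) * (u * v) = (x * u) * (y * v) := by
  intro x y u v
  calc (x * y) * (u * v) = (x * y) * (y * v) := h _ _ _ _ _
    _ = (y * v) * (y * x) := by rw [hcomm, hcomm x y]
    _ = (y * v) * (u * x) := h _ _ _ _ _
    _ = (x * u) * (y * v) := by rw [hcomm, hcomm u x]

/-- A commutative magma satisfying the generalized entropic property with
terms `t`, `s`, at least one of which is linear or symmetric, is medial. -/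
theorem stmt_14 {M : Type*} [Mul M] (hcomm : ∀ x y : M, x * y = y * x)
    (t s : FreeMagma (Fin 2))
    (hGEP : ∀ x y u v : M, (x * y) * (u * v) = evalBin t x u * evalBin s y v)
    (hts : IsLinear t ∨ IsLinear s ∨
      (∀ x y : M, evalBin t x y = evalBin t y x) ∨
      (∀ x y : M, evalBin s x y = evalBin s y x)) :
    ∀ x y u v : M, (x * y) * (u * v) = (x * u) * (y * v) := by
  have key : ((∀ x y z : M, evalBin t x y = evalBin t x z) ∨
      (∀ x y z : M, evalBin t x y = evalBin t z y) ∨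
      (∀ x y : M, evalBin t x y = evalBin t y x)) ∨
      ((∀ x y z : M, evalBin s x y = evalBin s x z) ∨
      (∀ x y z : M, evalBin s x y = evalBin s z y) ∨
      (∀ x y : M, evalBin s x y = evalBin s y x)) := by
    rcases hts with h | h | h | h
    · exact Or.inl (aux_linear hcomm t h)
    · exact Or.inr (aux_linear hcomm s h)
    · exact Or.inl (Or.inr (Or.inr h))
    · exact Or.inr (Or.inr (Or.inr h))
  rcases key with (h | h | h) | (h | h | h)
  · refine aux_const hcomm fun x y u w v => ?_
    rw [hGEP, hGEP, h x u w]
  · refine aux_const hcomm fun x y u w v => ?_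
    rw [hcomm, hcomm (x * y), hGEP, hGEP, h u x w]
  · intro x y u v
    rw [hcomm u v, hGEP, h, ← hGEP, hcomm, hcomm v y]
  · refine aux_const hcomm fun x y u w v => ?_
    rw [hcomm u, hcomm w, hGEP, hGEP, h y u w]
  · refine aux_const hcomm fun x y u w v => ?_
    rw [hcomm, hcomm (x * y), hcomm u, hcomm w, hGEP, hGEP, h u y w]
  · intro x y u v
    rw [hcomm u v, hGEP, h, ← hGEP, hcomm v y]
end

section
/- Let A be a set of permutations of the four-element index set {1,2,3,4}, and suppose the transposition (2,3) (exchanging the second and third indices) lies in the subgroup of the symmetric group on four elements generated by A. If a magma M satisfies, for every π in A, the identity (x_1*x_2)*(x_3*x_4) = (x_{π(1)}*x_{π(2)})*(x_{π(3)}*x_{π(4)}) for all x_1,x_2,x_3,x_4 in M, then M is medial. -/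
/-- If a magma satisfies the permuted-entropic identities for all permutations
in a set `A ⊆ S₄` whose generated subgroup contains the transposition
exchanging the second and third indices, then the magma is medial. -/
theorem stmt_15 {M : Type*} [Mul M] (A : Set (Equiv.Perm (Fin 4)))
    (hA : Equiv.swap (1 : Fin 4) 2 ∈ Subgroup.closure A)
    (h : ∀ π ∈ A, ∀ x : Fin 4 → M,
      (x 0 * x 1) * (x 2 * x 3) = (x (π 0) * x (π 1)) * (x (π 2) * x (π 3))) :
    ∀ x y u v : M, (x * y) * (u * v) = (x * u) * (y * v) := by
  have key : ∀ π ∈ Subgroup.closure A, ∀ x : Fin 4 → M,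
      (x 0 * x 1) * (x 2 * x 3) = (x (π 0) * x (π 1)) * (x (π 2) * x (π 3)) := by
    intro π hπ
    induction hπ using Subgroup.closure_induction with
    | mem p hp => exact h p hp
    | one => intro x; rfl
    | mul a b _ _ iha ihb =>
      intro x
      exact (iha x).trans (ihb (fun i => x (a i)))
    | inv a _ iha =>
      intro x
      have := iha (fun i => x (a⁻¹ i))
      have hi : ∀ i, a⁻¹ (a i) = i := fun i => a.symm_apply_apply i
      simp only [hi] at this
      exact this.symm
  intro x y u v
  have h0 : Equiv.swap (1 : Fin 4) 2 0 = 0 := by decide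
  have h1 : Equiv.swap (1 : Fin 4) 2 1 = 2 := by decide
  have h2 : Equiv.swap (1 : Fin 4) 2 2 = 1 := by decide
  have h3 : Equiv.swap (1 : Fin 4) 2 3 = 3 := by decide
  have := key _ hA ![x, y, u, v]
  rw [h0, h1, h2, h3] at this
  exact this
end

section
/- The magma G1 does not satisfy the generalized entropic property: there are no binary terms t, s such that (x*y)*(u*v) = t(x,u)*s(y,v) holds for all x,y,u,v in G1. -/
/-- The three-element groupoid `G1` from the paper, on `{a,b,c}` encoded as
`{0,1,2}`: a*a=a, a*b=c, a*c=c, b*a=c, b*b=b, b*c=c, c*a=a, c*b=b, c*c=c. -/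
def G1 : Type := Fin 3

def g1mul : Fin 3 → Fin 3 → Fin 3 := ![![0, 2, 2], ![2, 1, 2], ![0, 1, 2]]

instance : Mul G1 := ⟨g1mul⟩

theorem evalBin_cc (t : FreeMagma (Fin 2)) :
    evalBin t (show G1 from (2 : Fin 3)) (show G1 from (2 : Fin 3)) = (show G1 from (2 : Fin 3)) := by
  induction t with
  | ih1 i => fin_cases i <;> rfl
  | ih2 p q hp hq =>
    unfold evalBin at *
    rw [map_mul, hp, hq]
    rfl

theorem g1_aux : ∀ p r : Fin 3,
    g1mul (g1mul 2 1) (g1mul 2 0) = g1mul 2 r →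
    g1mul (g1mul 0 1) (g1mul 2 0) = g1mul p r → False := by
  decide

/-- `G1` does not satisfy the generalized entropic property. -/
theorem stmt_16 : ¬ ∃ t s : FreeMagma (Fin 2),
    ∀ x y u v : G1, (x * y) * (u * v) = evalBin t x u * evalBin s y v := by
  rintro ⟨t, s, h⟩
  have h1 := h (2 : Fin 3) (1 : Fin 3) (2 : Fin 3) (0 : Fin 3)
  have h2 := h (0 : Fin 3) (1 : Fin 3) (2 : Fin 3) (0 : Fin 3)
  have h3 := evalBin_cc t
  dsimp only at h3
  rw [h3] at h1
  exact g1_aux _ _ h1 h2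
end

section
/- Let V be a type of variables and let t, u be terms in the free magma on V. If G1 satisfies the identity t ≐ u, i.e., for every assignment f : V → G1 the evaluations of t and u under f are equal, then the focals coincide: fc(t) = fc(u). -/
/-- The focal (rightmost variable) of a term in the free magma on `V`. -/
def focal {V : Type*} : FreeMagma V → V
  | .of x => x
  | .mul _ t₂ => focal t₂

theorem lift_eq_focal {V : Type*} (f : V → G1)
    (hf : ∀ v, f v = (0 : Fin 3) ∨ f v = (2 : Fin 3)) (t : FreeMagma V) :
    FreeMagma.lift f t = f (focal t) := by
  induction t with
  | ih1 x => rfl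
  | ih2 s t ihs iht =>
    rw [map_mul, ihs, iht]
    change g1mul (f (focal s)) (f (focal t)) = f (focal t)
    rcases hf (focal s) with h1 | h1 <;> rcases hf (focal t) with h2 | h2 <;>
      rw [h1, h2] <;> rfl

/-- If `G1` satisfies an identity `t ≐ u`, then `t` and `u` have the same
focal. -/
theorem stmt_17 {V : Type*} (t u : FreeMagma V)
    (h : ∀ f : V → G1, FreeMagma.lift f t = FreeMagma.lift f u) :
    focal t = focal u := by
  classical
  let f : V → G1 := fun v => if v = focal t then (0 : Fin 3) else (2 : Fin 3)
  have hf : ∀ v, f v = (0 : Fin 3) ∨ f v = (2 : Fin 3) := by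
    intro v
    by_cases hv : v = focal t
    · exact Or.inl (if_pos hv)
    · exact Or.inr (if_neg hv)
  have key := h f
  rw [lift_eq_focal f hf, lift_eq_focal f hf] at key
  by_contra hne
  have e1 : f (focal t) = (0 : Fin 3) := if_pos rfl
  have e2 : f (focal u) = (2 : Fin 3) := if_neg (fun e => hne e.symm)
  have e3 : (0 : Fin 3) = (2 : Fin 3) := e1.symm.trans (key.trans e2)
  exact absurd e3 (by decide)
end

section
/- Every linear identity satisfied by G1 is regular: if t and u are linear terms in the free magma on a type V of variables, and G1 satisfies the identity t ≐ u (for every assignment f : V → G1 the evaluations of t and u under f are equal), then t and u contain exactly the same variables. -/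
/-- The set of variables occurring in a term of the free magma on `V`. -/
def vars {V : Type*} : FreeMagma V → Set V
  | .of x => {x}
  | .mul t₁ t₂ => vars t₁ ∪ vars t₂

/-- The number of occurrences of a variable `v` in a term. -/
def occCount {V : Type*} [DecidableEq V] (v : V) : FreeMagma V → ℕ
  | .of w => if w = v then 1 else 0
  | .mul t₁ t₂ => occCount v t₁ + occCount v t₂


theorem g1_lift_mul {V : Type*} (f : V → G1) (s t : FreeMagma V) :
    FreeMagma.lift f (FreeMagma.mul s t) = FreeMagma.lift f s * FreeMagma.lift f t := rfl

theorem g1_idem : ∀ r : G1, r * r = r := by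
  show ∀ r : Fin 3, g1mul r r = r
  decide

theorem g1_sepL : ∀ p q : G1, p ≠ q → ∃ r : G1, p * r ≠ q * r := by
  show ∀ p q : Fin 3, p ≠ q → ∃ r : Fin 3, g1mul p r ≠ g1mul q r
  decide

theorem g1_sepR : ∀ p q : G1, p ≠ q → ∃ r : G1, r * p ≠ r * q := by
  show ∀ p q : Fin 3, p ≠ q → ∃ r : Fin 3, g1mul r p ≠ g1mul r q
  decide

theorem g1_congr {V : Type*} (f g : V → G1) (t : FreeMagma V)
    (h : ∀ v ∈ vars t, f v = g v) : FreeMagma.lift f t = FreeMagma.lift g t := by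
  induction t using FreeMagma.rec with
  | of x => exact h x rfl
  | mul s t hs ht =>
    have e1 := hs fun v hv => h v (Or.inl hv)
    have e2 := ht fun v hv => h v (Or.inr hv)
    exact congrArg₂ (· * ·) e1 e2

theorem g1_const {V : Type*} (f : V → G1) (r : G1) (t : FreeMagma V)
    (h : ∀ v ∈ vars t, f v = r) : FreeMagma.lift f t = r := by
  induction t using FreeMagma.rec with
  | of x => exact h x rfl
  | mul s t hs ht =>
    have e1 := hs fun v hv => h v (Or.inl hv)
    have e2 := ht fun v hv => h v (Or.inr hv)
    exact (congrArg₂ (· * ·) e1 e2).trans (g1_idem r)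

theorem g1_occ {V : Type*} [DecidableEq V] (v : V) (t : FreeMagma V)
    (h : v ∈ vars t) : 1 ≤ occCount v t := by
  induction t using FreeMagma.rec with
  | of x =>
    have : v = x := h
    subst this
    show 1 ≤ if v = v then 1 else 0
    simp
  | mul s t hs ht =>
    show 1 ≤ occCount v s + occCount v t
    rcases h with h | h
    · have := hs h; omega
    · have := ht h; omega

theorem g1_dep {V : Type*} [DecidableEq V] (x : V) (t : FreeMagma V)
    (hl : ∀ v : V, occCount v t ≤ 1) (hx : x ∈ vars t) :
    ∃ f g : V → G1, (∀ v, v ≠ x → f v = g v) ∧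
      FreeMagma.lift f t ≠ FreeMagma.lift g t := by
  classical
  induction t using FreeMagma.rec with
  | of y =>
    have : x = y := hx
    subst this
    refine ⟨fun _ => (0 : Fin 3), fun v => if v = x then (1 : Fin 3) else (0 : Fin 3), ?_, ?_⟩
    · intro v hv
      exact (if_neg hv).symm
    · show (0 : Fin 3) ≠ if x = x then (1 : Fin 3) else (0 : Fin 3)
      simp
  | mul s t hs ht =>
    have hl' : ∀ v, occCount v s + occCount v t ≤ 1 := hl
    have hd : ∀ v, v ∈ vars s → v ∈ vars t → False := fun v h1 h2 => by
      have := g1_occ v s h1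
      have := g1_occ v t h2
      have := hl' v
      omega
    rcases hx with hx | hx
    · obtain ⟨f, g, hfg, hne⟩ := hs (fun v => by have := hl' v; omega) hx
      obtain ⟨r, hr⟩ := g1_sepL _ _ hne
      have key : ∀ k : V → G1, FreeMagma.lift (fun v => if v ∈ vars t then r else k v)
          (FreeMagma.mul s t) = FreeMagma.lift k s * r := fun k => by
        rw [g1_lift_mul, g1_const _ r t (fun v hv => if_pos hv),
          g1_congr _ k s (fun v hv => if_neg (hd v hv))]
      refine ⟨fun v => if v ∈ vars t then r else f v,
        fun v => if v ∈ vars t then r else g v, fun v hv => ?_, ?_⟩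
      · simp only [hfg v hv]
      · intro h
        exact hr ((key f).symm.trans (h.trans (key g)))
    · obtain ⟨f, g, hfg, hne⟩ := ht (fun v => by have := hl' v; omega) hx
      obtain ⟨r, hr⟩ := g1_sepR _ _ hne
      have key : ∀ k : V → G1, FreeMagma.lift (fun v => if v ∈ vars s then r else k v)
          (FreeMagma.mul s t) = r * FreeMagma.lift k t := fun k => by
        rw [g1_lift_mul, g1_const _ r s (fun v hv => if_pos hv),
          g1_congr _ k t (fun v hv => if_neg (fun h => hd v h hv))]
      refine ⟨fun v => if v ∈ vars s then r else f v,
        fun v => if v ∈ vars s then r else g v, fun v hv => ?_, ?_⟩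
      · simp only [hfg v hv]
      · intro h
        exact hr ((key f).symm.trans (h.trans (key g)))

theorem g1_sub {V : Type*} [DecidableEq V] (t u : FreeMagma V)
    (hlt : ∀ v : V, occCount v t ≤ 1)
    (h : ∀ f : V → G1, FreeMagma.lift f t = FreeMagma.lift f u) :
    vars t ⊆ vars u := by
  intro x hx
  by_contra hxu
  obtain ⟨f, g, hfg, hne⟩ := g1_dep x t hlt hx
  apply hne
  rw [h f, h g]
  exact g1_congr f g u fun v hv => hfg v fun e => hxu (e ▸ hv)

/-- Every linear identity satisfied by `G1` is regular: linear terms `t`, `u`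
with `t ≐ u` in `G1` contain exactly the same variables. -/
theorem stmt_18 {V : Type*} [DecidableEq V] (t u : FreeMagma V)
    (hlt : ∀ v : V, occCount v t ≤ 1) (hlu : ∀ v : V, occCount v u ≤ 1)
    (h : ∀ f : V → G1, FreeMagma.lift f t = FreeMagma.lift f u) :
    vars t = vars u := by
  exact Set.Subset.antisymm (g1_sub t u hlt h) (g1_sub u t hlu fun f => (h f).symm)
end
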